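/- arXiv:1111.6007 — 2 statements merged into one kernel-verified Lean document; each statement's English description precedes it below -/
import Mathlib

section
/- Let r ≥ 3 be an integer. For every nonempty finite simple r-regular graph G, the point (d₃(G), d₄(G)) lies in the convex polygon Q^r ⊂ ℝ², where Q^r is the convex hull of the points P^r_0 = (0, r(r−1)²/8) and, for l = 1, …, r, P^r_l = ( (1/3)·∑_{i=1}^{l} C(r_i^{(l)}, 2), (1/4)·∑_{i=1}^{l} r_i^{(l)}·C(r_i^{(l)} − 1, 2) ), with r_i^{(l)} = ⌊(r+i−1)/l⌋ for i = 1, …, l. -/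
open SimpleGraph

/-- The number of `k`-cycle subgraphs of `G`: each `k`-cycle subgraph corresponds to exactly
`2 * k` rooted closed walks that are cycles of length `k`. -/
noncomputable def cycleCount {V : Type*} (G : SimpleGraph V) (k : ℕ) : ℕ :=
  Nat.card ((x : V) × {p : G.Walk x x // p.IsCycle ∧ p.length = k}) / (2 * k)

/-- The density of `k`-cycles: the number of `k`-cycles divided by the number of vertices. -/
noncomputable def cycleDensity {V : Type*} (G : SimpleGraph V) (k : ℕ) : ℝ :=
  (cycleCount G k : ℝ) / (Nat.card V : ℝ)

/-- A graph is `r`-regular if every vertex has exactly `r` neighbors. -/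
def IsRegularGraph {V : Type*} (G : SimpleGraph V) (r : ℕ) : Prop :=
  ∀ v : V, Nat.card (G.neighborSet v) = r

/-- The point `P^r_l` for `1 ≤ l ≤ r`, built from the balanced partition
`r_i = ⌊(r + i - 1) / l⌋`, `i = 1, …, l` (here `i` runs over `0, …, l-1`, so `r_i = (r+i)/l`). -/
noncomputable def extremePoint (r l : ℕ) : ℝ × ℝ :=
  ((1 / 3 : ℝ) * ∑ i ∈ Finset.range l, (((r + i) / l).choose 2 : ℝ),
   (1 / 4 : ℝ) * ∑ i ∈ Finset.range l, (((r + i) / l * (((r + i) / l - 1).choose 2) : ℕ) : ℝ))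

/-- The vertex set of the polygon `Q^r`: the point `P^r_0 = (0, r(r-1)²/8)` together with
the points `P^r_l`, `l = 1, …, r`. -/
noncomputable def extremeSet (r : ℕ) : Set (ℝ × ℝ) :=
  insert ((0 : ℝ), (r : ℝ) * ((r : ℝ) - 1) ^ 2 / 8)
    {p : ℝ × ℝ | ∃ l : ℕ, 1 ≤ l ∧ l ≤ r ∧ p = extremePoint r l}

/-!
By separation it suffices that every linear functional `a * d₃ + b * d₄` is dominated at some vertex
of `Q^r`. For `b ≥ 0` this follows from `6 d₃ ≤ r (r - 1)` and `6 d₃ + 8 d₄ ≤ r (r - 1) ^ 2`, which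
come from extending an edge at one or both ends.

For `b < 0` one averages over the links `G[N(x)]`. A 4-cycle `w, x, y, z` contributes to the link of
`w` only if `w` and `y` are adjacent, and then as a cherry `x, y, z` that weighs one half when `x`
and `z` are adjacent; summed over its rooted versions this is at most half their number. So it is
enough to minimise (cherry weight) - `c / 2` * (number of darts) over all graphs on `r` vertices.
Replacing each vertex `x` by a clique of `w x` twins makes this a cubic in `w` which is concave
along any edge. Hence weight can be moved along edges until the support is independent, that is,
until the graph is a disjoint union of cliques; merging two cliques or shifting a vertex from a
larger to a smaller one then balances their sizes.
-/

section CycleCounting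

variable {V W : Type*} {G : SimpleGraph V}

theorem natCard_iso_dvd_natCard_copy (H : SimpleGraph W) (G : SimpleGraph V) :
    Nat.card (H ≃g H) ∣ Nat.card (H.Copy G) := by
  let _ : MulAction (H ≃g H) (H.Copy G) :=
    { smul := fun σ φ => φ.comp σ⁻¹.toCopy
      one_smul := fun _ => Copy.ext fun _ => rfl
      mul_smul := fun _ _ _ => Copy.ext fun _ => rfl }
  have stabilizer_eq_bot (φ : H.Copy G) : MulAction.stabilizer (H ≃g H) φ = ⊥ := by
    refine (Subgroup.eq_bot_iff_forall _).mpr fun σ hσ => inv_eq_one.mp ?_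
    exact RelIso.ext fun a => φ.injective (DFunLike.congr_fun hσ a)
  rw [Nat.card_congr (MulAction.selfEquivOrbitsQuotientProd stabilizer_eq_bot), Nat.card_prod]
  exact dvd_mul_left _ _

theorem rootedCycle_ext {k : ℕ} {s t : (x : V) × {p : G.Walk x x // p.IsCycle ∧ p.length = k}}
    (h : ∀ m ≤ k, s.2.1.getVert m = t.2.1.getVert m) : s = t := by
  obtain ⟨x, p, hp, hpk⟩ := s
  obtain ⟨y, q, hq, hqk⟩ := t
  obtain rfl : x = y := by simpa using h 0 k.zero_le
  congr 2
  exact Walk.ext_getVert_le_length (hpk.trans hqk.symm) fun m hm => h m (hpk ▸ hm)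

theorem cycleGraph_getVert_cycle_sub {n : ℕ} (i : Fin (n + 3)) :
    (cycleGraph.cycle n).getVert (n + 3 - i) = i := by
  rw [cycleGraph.getVert_cycle (Nat.sub_le _ _)]
  ext
  simp [Nat.sub_sub_self i.is_lt.le, Nat.mod_eq_of_lt i.is_lt]

theorem adj_getVert_sub_fin_add_one {n : ℕ} {x : V} {p : G.Walk x x} (hp : p.length = n + 3)
    (i : Fin (n + 3)) :
    G.Adj (p.getVert (n + 3 - (i + 1 : Fin (n + 3)))) (p.getVert (n + 3 - i)) := by
  rcases Fin.eq_castSucc_or_eq_last i with ⟨j, rfl⟩ | rfl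
  · have sub_eq : n + 3 - (j : ℕ) = n + 3 - (j + 1) + 1 := by lia
    rw [Fin.coeSucc_eq_succ, Fin.val_succ, Fin.val_castSucc, sub_eq]
    exact p.adj_getVert_succ (by lia)
  · have adj_first : G.Adj x (p.getVert 1) := by
      simpa using p.adj_getVert_succ (i := 0) (by lia)
    simpa [p.getVert_of_length_le hp.le] using adj_first

/-- The copy of the cycle graph traced out by a rooted cycle, indexed backwards because
`cycleGraph.cycle` runs through `0, n + 2, n + 1, …, 1, 0`. -/
def cycleGraphCopy {n : ℕ} {x : V} {p : G.Walk x x} (hp : p.IsCycle)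
    (hpn : p.length = n + 3) : (cycleGraph (n + 3)).Copy G where
  toHom :=
    { toFun := fun i => p.getVert (n + 3 - i)
      map_rel' := fun {i j} hij => by
        rcases cycleGraph_adj.mp hij with h | h
        · rw [sub_eq_iff_eq_add'.mp h]
          exact adj_getVert_sub_fin_add_one hpn j
        · rw [sub_eq_iff_eq_add'.mp h]
          exact (adj_getVert_sub_fin_add_one hpn i).symm }
  injective' i j hij := by
    have sub_eq : n + 3 - (i : ℕ) = n + 3 - j :=
      hp.getVert_injOn (Set.mem_ofPred.mpr (by lia)) (Set.mem_ofPred.mpr (by lia)) hij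
    lia

theorem cycleGraphCopy_apply {n : ℕ} {x : V} {p : G.Walk x x} (hp : p.IsCycle)
    (hpn : p.length = n + 3) (i : Fin (n + 3)) :
    cycleGraphCopy hp hpn i = p.getVert (n + 3 - i) := rfl

theorem natCard_rootedCycle (G : SimpleGraph V) (n : ℕ) :
    Nat.card ((x : V) × {p : G.Walk x x // p.IsCycle ∧ p.length = n + 3}) =
      Nat.card ((cycleGraph (n + 3)).Copy G) := by
  let rootedCycle (φ : (cycleGraph (n + 3)).Copy G) :
      (x : V) × {p : G.Walk x x // p.IsCycle ∧ p.length = n + 3} :=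
    ⟨φ 0, (cycleGraph.cycle n).map φ.toHom,
      (Walk.isCycle_map_iff_of_injective φ.injective).mpr cycleGraph.isCycle_cycle, by simp⟩
  have getVert_rootedCycle (φ : (cycleGraph (n + 3)).Copy G) (i : Fin (n + 3)) :
      (rootedCycle φ).2.1.getVert (n + 3 - i) = φ i :=
    (Walk.getVert_map ..).trans (congrArg φ (cycleGraph_getVert_cycle_sub i))
  refine (Nat.card_eq_of_bijective rootedCycle ⟨fun φ ψ h => Copy.ext fun i => ?_, ?_⟩).symm
  · rw [← getVert_rootedCycle φ, h, getVert_rootedCycle ψ]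
  · rintro ⟨x, p, hp, hpn⟩
    refine ⟨cycleGraphCopy hp hpn, rootedCycle_ext fun m hm => ?_⟩
    rcases m.eq_zero_or_pos with rfl | hm0
    · exact (Walk.getVert_zero _).trans
        ((p.getVert_of_length_le hpn.le).trans p.getVert_zero.symm)
    · have := getVert_rootedCycle (cycleGraphCopy hp hpn) ⟨n + 3 - m, by lia⟩
      simpa only [cycleGraphCopy_apply, Nat.sub_sub_self hm] using this

/-- Automorphisms of a graph as adjacency-preserving permutations, a type on which finite
enumeration is available. -/
def isoEquivPermSubtype (H : SimpleGraph W) :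
    (H ≃g H) ≃ {σ : Equiv.Perm W // ∀ a b, H.Adj (σ a) (σ b) ↔ H.Adj a b} where
  toFun f := ⟨f.toEquiv, fun _ _ => f.map_rel_iff⟩
  invFun σ := ⟨σ.1, σ.2 _ _⟩

theorem natCard_iso_cycleGraph_three : Nat.card (cycleGraph 3 ≃g cycleGraph 3) = 6 := by
  rw [Nat.card_congr (isoEquivPermSubtype _), Nat.card_eq_fintype_card]
  decide

theorem natCard_iso_cycleGraph_four : Nat.card (cycleGraph 4 ≃g cycleGraph 4) = 8 := by
  rw [Nat.card_congr (isoEquivPermSubtype _), Nat.card_eq_fintype_card]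
  decide

theorem cycleCount_three (G : SimpleGraph V) :
    6 * cycleCount G 3 = Nat.card ((cycleGraph 3).Copy G) := by
  rw [cycleCount, natCard_rootedCycle G 0]
  exact Nat.mul_div_cancel'
    (natCard_iso_cycleGraph_three ▸ natCard_iso_dvd_natCard_copy (cycleGraph 3) G)

theorem cycleCount_four (G : SimpleGraph V) :
    8 * cycleCount G 4 = Nat.card ((cycleGraph 4).Copy G) := by
  rw [cycleCount, natCard_rootedCycle G 1]
  exact Nat.mul_div_cancel'
    (natCard_iso_cycleGraph_four ▸ natCard_iso_dvd_natCard_copy (cycleGraph 4) G)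

variable [Fintype V]

open Classical in
/-- The ordered triangles of `G`. -/
noncomputable def triangleTuples (G : SimpleGraph V) : Finset (V × V × V) :=
  {t | G.Adj t.1 t.2.1 ∧ G.Adj t.2.1 t.2.2 ∧ G.Adj t.2.2 t.1}

open Classical in
/-- The ordered (not necessarily induced) four-cycles of `G`. -/
noncomputable def fourCycleTuples (G : SimpleGraph V) : Finset (V × V × V × V) :=
  {t | G.Adj t.1 t.2.1 ∧ G.Adj t.2.1 t.2.2.1 ∧ G.Adj t.2.2.1 t.2.2.2 ∧ G.Adj t.2.2.2 t.1 ∧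
    t.1 ≠ t.2.2.1 ∧ t.2.1 ≠ t.2.2.2}

@[simp]
theorem mem_triangleTuples {x y z : V} :
    (x, y, z) ∈ triangleTuples G ↔ G.Adj x y ∧ G.Adj y z ∧ G.Adj z x := by
  simp [triangleTuples]

@[simp]
theorem mem_fourCycleTuples {w x y z : V} : (w, x, y, z) ∈ fourCycleTuples G ↔
    G.Adj w x ∧ G.Adj x y ∧ G.Adj y z ∧ G.Adj z w ∧ w ≠ y ∧ x ≠ z := by
  simp [fourCycleTuples]

theorem natCard_copy_cycleGraph_three (G : SimpleGraph V) :
    Nat.card ((cycleGraph 3).Copy G) = (triangleTuples G).card := by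
  let toTuple (φ : (cycleGraph 3).Copy G) : triangleTuples G :=
    ⟨(φ 0, φ 1, φ 2), mem_triangleTuples.mpr ⟨φ.toHom.map_adj (by decide),
      φ.toHom.map_adj (by decide), φ.toHom.map_adj (by decide)⟩⟩
  have bijective : Function.Bijective toTuple := by
    refine ⟨fun φ ψ h => Copy.ext fun i => ?_, fun ⟨(x, y, z), h⟩ => ?_⟩
    · simp only [toTuple, Subtype.mk.injEq, Prod.mk.injEq] at h
      fin_cases i <;> simp [h]
    · obtain ⟨hxy, hyz, hzx⟩ := mem_triangleTuples.mp h
      have map_adj : ∀ i j, (cycleGraph 3).Adj i j → G.Adj (![x, y, z] i) (![x, y, z] j) := by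
        simp [Fin.forall_fin_succ, hxy, hyz, hzx, hxy.symm, hyz.symm, hzx.symm]
      have injective : Function.Injective ![x, y, z] := by
        simp [Function.Injective, Fin.forall_fin_succ, hxy.ne, hyz.ne, hzx.ne, hxy.ne', hyz.ne',
          hzx.ne']
      exact ⟨⟨⟨![x, y, z], map_adj _ _⟩, injective⟩, rfl⟩
  rw [Nat.card_eq_of_bijective _ bijective, Nat.card_eq_fintype_card, Fintype.card_coe]

theorem natCard_copy_cycleGraph_four (G : SimpleGraph V) :
    Nat.card ((cycleGraph 4).Copy G) = (fourCycleTuples G).card := by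
  let toTuple (φ : (cycleGraph 4).Copy G) : fourCycleTuples G :=
    ⟨(φ 0, φ 1, φ 2, φ 3), mem_fourCycleTuples.mpr ⟨φ.toHom.map_adj (by decide),
      φ.toHom.map_adj (by decide), φ.toHom.map_adj (by decide), φ.toHom.map_adj (by decide),
      φ.injective.ne (by decide), φ.injective.ne (by decide)⟩⟩
  have bijective : Function.Bijective toTuple := by
    refine ⟨fun φ ψ h => Copy.ext fun i => ?_, fun ⟨(w, x, y, z), h⟩ => ?_⟩
    · simp only [toTuple, Subtype.mk.injEq, Prod.mk.injEq] at h
      fin_cases i <;> simp [h]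
    · obtain ⟨hwx, hxy, hyz, hzw, hwy, hxz⟩ := mem_fourCycleTuples.mp h
      have map_adj : ∀ i j,
          (cycleGraph 4).Adj i j → G.Adj (![w, x, y, z] i) (![w, x, y, z] j) := by
        simp [Fin.forall_fin_succ, cycleGraph_adj, hwx, hxy, hyz, hzw, hwx.symm, hxy.symm,
          hyz.symm, hzw.symm, show (-2 : Fin 4) ≠ 1 by decide]
      have injective : Function.Injective ![w, x, y, z] := by
        simp [Function.Injective, Fin.forall_fin_succ, hwx.ne, hxy.ne, hyz.ne, hzw.ne, hwx.ne',
          hxy.ne', hyz.ne', hzw.ne', hwy, hxz, hwy.symm, hxz.symm]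
      exact ⟨⟨⟨![w, x, y, z], map_adj _ _⟩, injective⟩, rfl⟩
  rw [Nat.card_eq_of_bijective _ bijective, Nat.card_eq_fintype_card, Fintype.card_coe]

theorem cycleDensity_three (G : SimpleGraph V) :
    cycleDensity G 3 = (triangleTuples G).card / 6 / Fintype.card V := by
  rw [cycleDensity, ← natCard_copy_cycleGraph_three, ← cycleCount_three,
    Nat.card_eq_fintype_card]
  push_cast
  rw [mul_div_cancel_left₀ _ (by norm_num)]

theorem cycleDensity_four (G : SimpleGraph V) :
    cycleDensity G 4 = (fourCycleTuples G).card / 8 / Fintype.card V := by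
  rw [cycleDensity, ← natCard_copy_cycleGraph_four, ← cycleCount_four,
    Nat.card_eq_fintype_card]
  push_cast
  rw [mul_div_cancel_left₀ _ (by norm_num)]

end CycleCounting

section NatCast

theorem cast_mul_pred (m : ℕ) : ((m * (m - 1) : ℕ) : ℝ) = m * (m - 1) := by
  cases m <;> simp

theorem cast_mul_pred_sq (m : ℕ) : ((m * (m - 1) ^ 2 : ℕ) : ℝ) = m * (m - 1) ^ 2 := by
  cases m <;> simp

theorem cast_mul_choose_pred_two (m : ℕ) :
    ((m * (m - 1).choose 2 : ℕ) : ℝ) = m * (m - 1) * (m - 2) / 2 := by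
  cases m with
  | zero => simp
  | succ m =>
    rw [Nat.add_sub_cancel, Nat.cast_mul, Nat.cast_choose_two]
    push_cast
    ring

end NatCast

section UpperBounds

variable {V : Type*} [Fintype V] {G : SimpleGraph V} {r : ℕ}

open Classical in
theorem IsRegularGraph.isRegularOfDegree (hG : IsRegularGraph G r) : G.IsRegularOfDegree r :=
  fun x => (G.card_neighborSet_eq_degree x).symm.trans
    (Nat.card_eq_fintype_card.symm.trans (hG x))

open Classical in
theorem IsRegularGraph.card_dart (hG : IsRegularGraph G r) :
    Fintype.card G.Dart = Fintype.card V * r := by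
  simp [G.dart_card_eq_sum_degrees, hG.isRegularOfDegree.degree_eq]

open Classical in
theorem IsRegularGraph.card_neighborFinset_erase (hG : IsRegularGraph G r) {x y : V}
    (hxy : G.Adj x y) : ((G.neighborFinset x).erase y).card = r - 1 := by
  rw [Finset.card_erase_of_mem ((G.mem_neighborFinset x y).mpr hxy),
    G.card_neighborFinset_eq_degree, hG.isRegularOfDegree.degree_eq]

open Classical in
/-- A dart of `G` together with a further edge at its head and a further edge at its tail; the
endpoints of these two edges may coincide. -/
noncomputable def doublyExtendedDarts (G : SimpleGraph V) : Finset (Σ _ : G.Dart, V × V) :=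
  Finset.univ.sigma fun d =>
    (G.neighborFinset d.snd).erase d.fst ×ˢ (G.neighborFinset d.fst).erase d.snd

theorem IsRegularGraph.card_doublyExtendedDarts (hG : IsRegularGraph G r) :
    (doublyExtendedDarts G).card = Fintype.card V * (r * (r - 1) ^ 2) := by
  classical
  simp only [doublyExtendedDarts, Finset.card_sigma, Finset.card_product,
    hG.card_neighborFinset_erase (Dart.adj _), hG.card_neighborFinset_erase (Dart.adj _).symm,
    Finset.sum_const, Finset.card_univ, hG.card_dart, smul_eq_mul]
  ring

open Classical in
theorem card_triangleTuples_le_card_doublyExtendedDarts (G : SimpleGraph V) :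
    (triangleTuples G).card ≤
      ((doublyExtendedDarts G).filter fun e => e.2.1 = e.2.2).card := by
  refine Finset.card_le_card_of_surjOn (fun e => (e.1.fst, e.1.snd, e.2.1)) ?_
  rintro ⟨x, y, z⟩ h
  obtain ⟨hxy, hyz, hzx⟩ := mem_triangleTuples.mp h
  exact ⟨⟨⟨(x, y), hxy⟩, z, z⟩,
    by simp [doublyExtendedDarts, hyz, hzx.symm, hzx.ne, hyz.ne'], rfl⟩

open Classical in
theorem card_fourCycleTuples_le_card_doublyExtendedDarts (G : SimpleGraph V) :
    (fourCycleTuples G).card ≤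
      ((doublyExtendedDarts G).filter fun e => ¬e.2.1 = e.2.2).card := by
  refine Finset.card_le_card_of_surjOn (fun e => (e.1.fst, e.1.snd, e.2.1, e.2.2)) ?_
  rintro ⟨w, x, y, z⟩ h
  obtain ⟨hwx, hxy, hyz, hzw, hwy, hxz⟩ := mem_fourCycleTuples.mp h
  exact ⟨⟨⟨(w, x), hwx⟩, y, z⟩,
    by simp [doublyExtendedDarts, hxy, hzw.symm, hyz.ne, hwy.symm, hxz.symm], rfl⟩

theorem IsRegularGraph.card_triangleTuples_add_card_fourCycleTuples_le
    (hG : IsRegularGraph G r) :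
    (triangleTuples G).card + (fourCycleTuples G).card ≤ Fintype.card V * (r * (r - 1) ^ 2) := by
  classical
  rw [← hG.card_doublyExtendedDarts,
    ← Finset.card_filter_add_card_filter_not (s := doublyExtendedDarts G)
      (fun e => e.2.1 = e.2.2)]
  exact add_le_add (card_triangleTuples_le_card_doublyExtendedDarts G)
    (card_fourCycleTuples_le_card_doublyExtendedDarts G)

theorem IsRegularGraph.card_triangleTuples_le (hG : IsRegularGraph G r) :
    (triangleTuples G).card ≤ Fintype.card V * (r * (r - 1)) := by
  classical
  calc (triangleTuples G).card
      ≤ (Finset.univ.sigma fun d : G.Dart => (G.neighborFinset d.snd).erase d.fst).card := by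
        refine Finset.card_le_card_of_surjOn (fun e => (e.1.fst, e.1.snd, e.2)) ?_
        rintro ⟨x, y, z⟩ h
        obtain ⟨hxy, hyz, hzx⟩ := mem_triangleTuples.mp h
        exact ⟨⟨⟨(x, y), hxy⟩, z⟩, by simp [hyz, hzx.ne], rfl⟩
    _ = Fintype.card V * (r * (r - 1)) := by
        simp [Finset.card_sigma, hG.card_neighborFinset_erase (Dart.adj _).symm, hG.card_dart,
          mul_assoc]

end UpperBounds

section NonnegativeFunctionals

theorem completeGraph_densities_mem_extremeSet (r : ℕ) :
    ((r * (r - 1) / 6 : ℝ), (r * (r - 1) * (r - 2) / 8 : ℝ)) ∈ extremeSet r := by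
  rcases r.eq_zero_or_pos with rfl | hr
  · simp [extremeSet]
  · refine Set.mem_insert_of_mem _ ⟨1, le_rfl, hr, Prod.ext ?_ ?_⟩
    · simp only [extremePoint, Finset.sum_range_one, Nat.add_zero, Nat.div_one,
        Nat.cast_choose_two]
      ring
    · simp only [extremePoint, Finset.sum_range_one, Nat.add_zero, Nat.div_one,
        cast_mul_choose_pred_two]
      ring

variable {V : Type*} [Finite V] {G : SimpleGraph V} {r : ℕ}

theorem IsRegularGraph.cycleDensity_three_le (hG : IsRegularGraph G r) :
    cycleDensity G 3 ≤ r * (r - 1) / 6 := by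
  have := Fintype.ofFinite V
  have cast_le : ((triangleTuples G).card : ℝ) ≤ Fintype.card V * (r * (r - 1)) := by
    rw [← cast_mul_pred]
    exact_mod_cast hG.card_triangleTuples_le
  rw [cycleDensity_three]
  refine div_le_of_le_mul₀ (Nat.cast_nonneg _) ?_ (by linarith)
  rw [← cast_mul_pred]
  positivity

theorem IsRegularGraph.cycleDensity_three_add_cycleDensity_four_le (hG : IsRegularGraph G r) :
    6 * cycleDensity G 3 + 8 * cycleDensity G 4 ≤ r * (r - 1) ^ 2 := by
  have := Fintype.ofFinite V
  have cast_le : ((triangleTuples G).card + (fourCycleTuples G).card : ℝ) ≤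
      Fintype.card V * (r * (r - 1) ^ 2) := by
    rw [← cast_mul_pred_sq]
    exact_mod_cast hG.card_triangleTuples_add_card_fourCycleTuples_le
  calc 6 * cycleDensity G 3 + 8 * cycleDensity G 4
      = ((triangleTuples G).card + (fourCycleTuples G).card) / Fintype.card V := by
        rw [cycleDensity_three, cycleDensity_four]
        ring
    _ ≤ r * (r - 1) ^ 2 :=
        div_le_of_le_mul₀ (Nat.cast_nonneg _) (by positivity) (by linarith)

theorem IsRegularGraph.exists_mem_extremeSet_ge_of_nonneg (hG : IsRegularGraph G r) (a : ℝ)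
    {b : ℝ} (hb : 0 ≤ b) :
    ∃ p ∈ extremeSet r, a * cycleDensity G 3 + b * cycleDensity G 4 ≤ a * p.1 + b * p.2 := by
  have d₃_nonneg : 0 ≤ cycleDensity G 3 := by
    unfold cycleDensity
    positivity
  have d₃_le := hG.cycleDensity_three_le
  have d₄_le := mul_le_mul_of_nonneg_left hG.cycleDensity_three_add_cycleDensity_four_le hb
  rcases le_total (4 * a) (3 * b) with h | h
  · refine ⟨_, Set.mem_insert _ _, ?_⟩
    linarith [mul_nonneg (sub_nonneg.mpr h) d₃_nonneg]
  · refine ⟨_, completeGraph_densities_mem_extremeSet r, ?_⟩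
    linarith [mul_le_mul_of_nonneg_left d₃_le (sub_nonneg.mpr h)]

end NonnegativeFunctionals

section Convexity

theorem mem_convexHull_of_forall_exists_le {E : Type*} [AddCommGroup E] [Module ℝ E]
    [TopologicalSpace E] [IsTopologicalAddGroup E] [ContinuousSMul ℝ E] [LocallyConvexSpace ℝ E]
    [T2Space E] {S : Set E} (hS : S.Finite) {q : E} (h : ∀ f : E →L[ℝ] ℝ, ∃ p ∈ S, f q ≤ f p) :
    q ∈ convexHull ℝ S := by
  by_contra hq
  obtain ⟨f, u, f_lt, lt_f⟩ :=
    geometric_hahn_banach_closed_point (convex_convexHull ℝ S) (hS.isClosed_convexHull ℝ) hq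
  obtain ⟨p, hp, hqp⟩ := h f
  exact ((f_lt p (subset_convexHull ℝ S hp)).trans lt_f).not_ge hqp

theorem mem_convexHull_prod_of_forall_exists_le {S : Set (ℝ × ℝ)} (hS : S.Finite) {q : ℝ × ℝ}
    (h : ∀ a b : ℝ, ∃ p ∈ S, a * q.1 + b * q.2 ≤ a * p.1 + b * p.2) : q ∈ convexHull ℝ S := by
  refine mem_convexHull_of_forall_exists_le hS fun f => ?_
  have f_apply (p : ℝ × ℝ) : f p = f (1, 0) * p.1 + f (0, 1) * p.2 := by
    calc f p = f (p.1 • ((1 : ℝ), (0 : ℝ)) + p.2 • ((0 : ℝ), (1 : ℝ))) := by simp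
      _ = f (1, 0) * p.1 + f (0, 1) * p.2 := by
        rw [map_add, map_smul, map_smul, smul_eq_mul, smul_eq_mul, mul_comm, mul_comm p.2]
  simpa only [← f_apply] using h (f (1, 0)) (f (0, 1))

theorem finite_extremeSet (r : ℕ) : (extremeSet r).Finite :=
  (((Set.finite_Icc 1 r).image (extremePoint r)).subset (by
    rintro _ ⟨l, hl, hlr, rfl⟩
    exact ⟨l, ⟨hl, hlr⟩, rfl⟩)).insert _

end Convexity

section Balancing

theorem sum_range_add_div {l : ℕ} (hl : 0 < l) (r : ℕ) :
    ∑ i ∈ Finset.range l, (r + i) / l = r := by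
  induction r with
  | zero =>
    exact Finset.sum_eq_zero fun i hi => by
      rw [zero_add, Nat.div_eq_of_lt (Finset.mem_range.mp hi)]
  | succ r ih =>
    have shift := (Finset.sum_range_succ' (fun i => (r + i) / l) l).symm.trans
      (Finset.sum_range_succ (fun i => (r + i) / l) l)
    rw [ih, Nat.add_div_right r hl, Nat.add_zero] at shift
    simp only [Nat.add_right_comm r 1, Nat.add_assoc r _ 1]
    lia

theorem sum_eq_of_consecutive {R α : Type*} [CommRing R] (F : ℕ → R) (s : Finset α) (w : α → ℕ)
    (k : ℕ) (hw : ∀ x ∈ s, w x = k ∨ w x = k + 1) :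
    ∑ x ∈ s, F (w x) = s.card * F k + (↑(∑ x ∈ s, w x) - s.card * k) * (F (k + 1) - F k) := by
  have affine : ∀ x ∈ s, F (w x) = F k + ((w x : R) - k) * (F (k + 1) - F k) := by
    intro x hx
    rcases hw x hx with h | h <;> rw [h] <;> push_cast <;> ring
  rw [Finset.sum_congr rfl affine, Finset.sum_add_distrib, ← Finset.sum_mul,
    Finset.sum_sub_distrib]
  simp

theorem sum_eq_sum_balanced_of_le_add_one {R α : Type*} [CommRing R] (F : ℕ → R) {s : Finset α}
    (hs : s.Nonempty) {w : α → ℕ} (hw : ∀ u ∈ s, ∀ v ∈ s, w u ≤ w v + 1) :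
    ∑ x ∈ s, F (w x) = ∑ i ∈ Finset.range s.card, F ((∑ x ∈ s, w x + i) / s.card) := by
  obtain ⟨m, hm, hmin⟩ := s.exists_min_image w hs
  have consecutive : ∀ x ∈ s, w x = w m ∨ w x = w m + 1 := fun x hx => by
    have := hmin x hx
    have := hw x hx m hm
    lia
  have card_mul_le : s.card * w m ≤ ∑ x ∈ s, w x := s.card_nsmul_le_sum w _ hmin
  have le_card_mul : ∑ x ∈ s, w x ≤ s.card * (w m + 1) :=
    s.sum_le_card_nsmul w _ fun x hx => hw x hx m hm
  have consecutive_div : ∀ i ∈ Finset.range s.card,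
      (∑ x ∈ s, w x + i) / s.card = w m ∨ (∑ x ∈ s, w x + i) / s.card = w m + 1 := by
    intro i hi
    have hi := Finset.mem_range.mp hi
    have le_div : w m ≤ (∑ x ∈ s, w x + i) / s.card := by
      rw [Nat.le_div_iff_mul_le hs.card_pos]
      lia
    have div_lt : (∑ x ∈ s, w x + i) / s.card < w m + 2 := by
      rw [Nat.div_lt_iff_lt_mul hs.card_pos]
      lia
    lia
  rw [sum_eq_of_consecutive F s w (w m) consecutive,
    sum_eq_of_consecutive F (Finset.range s.card) _ (w m) consecutive_div,
    sum_range_add_div hs.card_pos, Finset.card_range]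

theorem sum_comp_update_update {ι α M : Type*} [Fintype ι] [DecidableEq ι] [AddCommMonoid M]
    (F : α → M) (w : ι → α) {u v : ι} (huv : u ≠ v) (a b : α) :
    ∑ x, F (Function.update (Function.update w u a) v b x) + (F (w u) + F (w v)) =
      ∑ x, F (w x) + (F a + F b) := by
  have v_mem : v ∈ Finset.univ.erase u := by simp [huv.symm]
  have rest : ∑ x ∈ (Finset.univ.erase u).erase v,
      F (Function.update (Function.update w u a) v b x) =
        ∑ x ∈ (Finset.univ.erase u).erase v, F (w x) := by
    refine Finset.sum_congr rfl fun x hx => ?_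
    simp only [Finset.mem_erase, Finset.mem_univ, and_true] at hx
    rw [Function.update_of_ne hx.1, Function.update_of_ne hx.2]
  simp only [← Finset.add_sum_erase _ _ (Finset.mem_univ u), ← Finset.add_sum_erase _ _ v_mem]
  rw [rest, Function.update_of_ne huv, Function.update_self, Function.update_self]
  abel

theorem exists_balanced_weights_sum_le {ι : Type*} [Fintype ι] {F : ℕ → ℝ} (F_zero : F 0 = 0)
    (merge_or_shift : ∀ a b, b ≠ 0 → b < a →
      F (a + 1 + b) < F (a + 1) + F b ∨ F a + F (b + 1) ≤ F (a + 1) + F b) (w₀ : ι → ℕ) :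
    ∃ w : ι → ℕ, ∑ x, w x = ∑ x, w₀ x ∧ (∀ u v, w v ≠ 0 → w u ≤ w v + 1) ∧
      ∑ x, F (w x) ≤ ∑ x, F (w₀ x) := by
  classical
  obtain ⟨w, hw, hmin⟩ :=
    (Finset.piAntidiag Finset.univ (∑ x, w₀ x)).exists_min_image
      (fun w => toLex (∑ x, F (w x), ∑ x, w x ^ 2)) ⟨w₀, by simp⟩
  replace hw : ∑ x, w x = ∑ x, w₀ x := by simpa using hw
  replace hmin (w' : ι → ℕ) (hw' : ∑ x, w' x = ∑ x, w₀ x) : ∑ x, F (w x) < ∑ x, F (w' x) ∨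
      ∑ x, F (w x) = ∑ x, F (w' x) ∧ ∑ x, w x ^ 2 ≤ ∑ x, w' x ^ 2 :=
    Prod.Lex.toLex_le_toLex.mp (hmin w' (by simpa using hw'))
  refine ⟨w, hw, fun u v hv => ?_, (hmin w₀ rfl).elim le_of_lt fun h => h.1.le⟩
  by_contra! h
  obtain ⟨a, ha⟩ : ∃ a, w u = a + 1 := ⟨w u - 1, by lia⟩
  have huv : u ≠ v := by rintro rfl; lia
  rcases merge_or_shift a (w v) hv (by lia) with merge | shift
  · have sum_update := sum_comp_update_update id w huv (a + 1 + w v) 0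
    have F_update := sum_comp_update_update F w huv (a + 1 + w v) 0
    rw [ha, F_zero] at F_update
    simp only [id] at sum_update
    rcases hmin (Function.update (Function.update w u (a + 1 + w v)) v 0) (by lia) with
      hlt | ⟨heq, -⟩ <;> linarith
  · have sum_update := sum_comp_update_update id w huv a (w v + 1)
    have F_update := sum_comp_update_update F w huv a (w v + 1)
    have sq_update := sum_comp_update_update (· ^ 2) w huv a (w v + 1)
    rw [ha] at F_update sq_update
    simp only [id] at sum_update
    rcases hmin (Function.update (Function.update w u a) v (w v + 1)) (by lia) with
      hlt | ⟨-, hle⟩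
    · linarith
    · nlinarith

theorem exists_balanced_sum_le {ι : Type*} [Fintype ι] {F : ℕ → ℝ} (F_zero : F 0 = 0)
    (merge_or_shift : ∀ a b, b ≠ 0 → b < a →
      F (a + 1 + b) < F (a + 1) + F b ∨ F a + F (b + 1) ≤ F (a + 1) + F b)
    {w₀ : ι → ℕ} (hw₀ : 0 < ∑ x, w₀ x) :
    ∃ l, 1 ≤ l ∧ l ≤ ∑ x, w₀ x ∧
      ∑ i ∈ Finset.range l, F ((∑ x, w₀ x + i) / l) ≤ ∑ x, F (w₀ x) := by
  obtain ⟨w, hw, balanced, hF⟩ := exists_balanced_weights_sum_le F_zero merge_or_shift w₀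
  set s := Finset.univ.filter fun x => w x ≠ 0 with hs
  have sum_s : ∑ x ∈ s, w x = ∑ x, w₀ x := by rw [hs, Finset.sum_filter_ne_zero, hw]
  have F_sum_s : ∑ x ∈ s, F (w x) = ∑ x, F (w x) :=
    Finset.sum_filter_of_ne fun x _ hx hx0 => hx (by rw [hx0, F_zero])
  have s_nonempty : s.Nonempty := Finset.nonempty_of_sum_ne_zero (sum_s.trans_ne hw₀.ne')
  refine ⟨s.card, s_nonempty.card_pos, ?_, ?_⟩
  · rw [← sum_s, Finset.card_eq_sum_ones]
    exact Finset.sum_le_sum fun x hx => Nat.one_le_iff_ne_zero.mpr (Finset.mem_filter.mp hx).2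
  · rw [← sum_s, ← sum_eq_sum_balanced_of_le_add_one F s_nonempty fun u _ v hv =>
      balanced u v (Finset.mem_filter.mp hv).2, F_sum_s]
    exact hF

end Balancing

section TripleSum

variable {ι R : Type*} [Fintype ι] [CommRing R]

/-- The trilinear form with coefficients `g`, evaluated at the vectors `a`, `b`, `c`. -/
def tripleSum (g : ι → ι → ι → R) (a b c : ι → R) : R :=
  ∑ x, a x * ∑ y, b y * ∑ z, c z * g x y z

theorem tripleSum_add_smul (g : ι → ι → ι → R) (w d : ι → R) (t : R) :
    tripleSum g (w + t • d) (w + t • d) (w + t • d) = tripleSum g w w w +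
      t * (tripleSum g d w w + tripleSum g w d w + tripleSum g w w d) +
      t ^ 2 * (tripleSum g d d w + tripleSum g d w d + tripleSum g w d d) +
      t ^ 3 * tripleSum g d d d := by
  simp only [tripleSum, Finset.mul_sum, ← Finset.sum_add_distrib, Pi.add_apply, Pi.smul_apply,
    smul_eq_mul]
  refine Finset.sum_congr rfl fun x _ => Finset.sum_congr rfl fun y _ =>
    Finset.sum_congr rfl fun z _ => ?_
  ring

theorem sum_single_sub_single_mul [DecidableEq ι] (u v : ι) (h : ι → R) :
    ∑ x, (Pi.single v 1 - Pi.single u 1 : ι → R) x * h x = h v - h u := by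
  simp [sub_mul, Pi.single_apply]

theorem cast_update_update_eq_add_smul {ι : Type*} [DecidableEq ι] (w : ι → ℕ) {u v : ι}
    (huv : u ≠ v) {a b : ℕ} (hab : a + b = w u + w v) :
    (fun x => (Function.update (Function.update w u a) v b x : ℝ)) =
      (fun x => (w x : ℝ)) + ((b : ℝ) - w v) • (Pi.single v 1 - Pi.single u 1) := by
  have cast_a : (a : ℝ) = w u + w v - b := by
    rw [eq_sub_iff_add_eq]
    exact_mod_cast hab
  ext x
  rcases eq_or_ne x v with rfl | hxv
  · simp [huv.symm]
  rcases eq_or_ne x u with rfl | hxu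
  · simp [hxv, cast_a]
    ring
  · simp [hxv, hxu]

end TripleSum

section BlowUp

variable {ι : Type*} (H : SimpleGraph ι)

open Classical in
/-- The adjacency indicator of `H` with a loop added at every vertex. -/
noncomputable def closedAdj (x y : ι) : ℝ :=
  if x = y ∨ H.Adj x y then 1 else 0

/-- The weight of the walk `x, y, z` in the reflexive closure of `H`: a walk with adjacent or equal
endpoints counts one half. -/
noncomputable def closedCherry (x y z : ι) : ℝ :=
  closedAdj H x y * (closedAdj H y z * (1 - closedAdj H x z / 2))

/-- The weighted count of closed cherries minus `μ` times that of closed edges in the graph obtained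
from `H` by replacing each vertex `x` by a clique of `w x` twins. Real weights are allowed. -/
noncomputable def blowUpEnergy [Fintype ι] (μ : ℝ) (w : ι → ℝ) : ℝ :=
  tripleSum (closedCherry H) w w w - μ * ∑ x, w x * ∑ y, w y * closedAdj H x y

variable {H}

theorem closedAdj_self (x : ι) : closedAdj H x x = 1 := by simp [closedAdj]

theorem closedAdj_comm (x y : ι) : closedAdj H x y = closedAdj H y x := by
  classical
  exact if_congr (or_congr eq_comm (H.adj_comm x y)) rfl rfl

theorem closedAdj_of_adj {x y : ι} (h : H.Adj x y) : closedAdj H x y = 1 := by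
  simp [closedAdj, h]

variable [Fintype ι]

/-- Zykov symmetrisation: moving weight along an edge is concave, since `u` and `v` span a clique,
which cancels the cubic term and the quadratic part of the edge count. -/
theorem blowUpEnergy_add_smul [DecidableEq ι] (μ : ℝ) (w : ι → ℝ) {u v : ι} (huv : H.Adj u v) :
    ∃ L : ℝ, ∀ t : ℝ,
      blowUpEnergy H μ (w + t • (Pi.single v 1 - Pi.single u 1)) =
        blowUpEnergy H μ w + t * L -
          t ^ 2 / 2 * ∑ x, w x * (closedAdj H u x - closedAdj H v x) ^ 2 := by
  set d : ι → ℝ := Pi.single v 1 - Pi.single u 1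
  have sum_d_mul (h : ι → ℝ) : ∑ x, d x * h x = h v - h u := sum_single_sub_single_mul u v h
  have B_uv := closedAdj_of_adj huv
  have B_vu := closedAdj_of_adj huv.symm
  have cubic : tripleSum (closedCherry H) d d d = 0 := by
    simp only [tripleSum, sum_d_mul, closedCherry, closedAdj_self, B_uv, B_vu]
    ring
  have quadratic : tripleSum (closedCherry H) d d w + tripleSum (closedCherry H) d w d +
      tripleSum (closedCherry H) w d d =
        -(∑ x, w x * (closedAdj H u x - closedAdj H v x) ^ 2) / 2 := by
    simp only [tripleSum, sum_d_mul, closedCherry, closedAdj_self, B_uv, B_vu,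
      closedAdj_comm _ u, closedAdj_comm _ v]
    simp only [mul_sub, neg_div, Finset.sum_div, ← Finset.sum_sub_distrib,
      ← Finset.sum_add_distrib, ← Finset.sum_neg_distrib]
    exact Finset.sum_congr rfl fun x _ => by ring
  have closedEdges (t : ℝ) :
      ∑ x, (w + t • d) x * ∑ y, (w + t • d) y * closedAdj H x y =
        ∑ x, w x * ∑ y, w y * closedAdj H x y +
          t * (2 * ∑ x, w x * (closedAdj H v x - closedAdj H u x)) := by
    simp only [Pi.add_apply, Pi.smul_apply, smul_eq_mul, add_mul, mul_add, mul_assoc,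
      Finset.sum_add_distrib, ← Finset.mul_sum, sum_d_mul, closedAdj_self, B_uv, B_vu,
      closedAdj_comm _ u, closedAdj_comm _ v, mul_left_comm _ t]
    simp only [mul_sub (w _), Finset.sum_sub_distrib]
    ring
  refine ⟨tripleSum (closedCherry H) d w w + tripleSum (closedCherry H) w d w +
    tripleSum (closedCherry H) w w d -
      μ * (2 * ∑ x, w x * (closedAdj H v x - closedAdj H u x)), fun t => ?_⟩
  rw [blowUpEnergy, blowUpEnergy, tripleSum_add_smul, cubic, quadratic, closedEdges]
  ring

theorem exists_blowUpEnergy_le_of_adj (μ : ℝ) (w : ι → ℕ) {u v : ι} (huv : H.Adj u v)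
    (hu : w u ≠ 0) (hv : w v ≠ 0) :
    ∃ w' : ι → ℕ, ∑ x, w' x = ∑ x, w x ∧ ∑ x, min (w' x) 1 < ∑ x, min (w x) 1 ∧
      blowUpEnergy H μ (fun x => w' x) ≤ blowUpEnergy H μ fun x => w x := by
  classical
  obtain ⟨L, hL⟩ := blowUpEnergy_add_smul μ (fun x => (w x : ℝ)) huv
  have sum_nonneg : 0 ≤ ∑ x, (w x : ℝ) * (closedAdj H u x - closedAdj H v x) ^ 2 :=
    Finset.sum_nonneg fun x _ => by positivity
  have shift_all (a b : ℕ) (hab : a + b = w u + w v) (h0 : a = 0 ∨ b = 0)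
      (hle : ((b : ℝ) - w v) * L ≤ 0) :
      ∃ w' : ι → ℕ, ∑ x, w' x = ∑ x, w x ∧ ∑ x, min (w' x) 1 < ∑ x, min (w x) 1 ∧
        blowUpEnergy H μ (fun x => w' x) ≤ blowUpEnergy H μ fun x => w x := by
    refine ⟨Function.update (Function.update w u a) v b, ?_, ?_, ?_⟩
    · have sum_update := sum_comp_update_update id w huv.ne a b
      simp only [id] at sum_update
      lia
    · have min_update := sum_comp_update_update (min · 1) w huv.ne a b
      lia
    · rw [cast_update_update_eq_add_smul w huv.ne hab, hL]
      nlinarith [mul_nonneg (sq_nonneg ((b : ℝ) - w v)) sum_nonneg]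
  rcases le_total L 0 with h | h
  · exact shift_all 0 (w u + w v) (by lia) (Or.inl rfl) (by
      push_cast
      nlinarith [Nat.cast_nonneg (α := ℝ) (w u)])
  · exact shift_all (w u + w v) 0 (by lia) (Or.inr rfl) (by
      push_cast
      nlinarith [Nat.cast_nonneg (α := ℝ) (w v)])

theorem exists_independent_blowUpEnergy_le (H : SimpleGraph ι) (μ : ℝ) (w₀ : ι → ℕ) :
    ∃ w : ι → ℕ, ∑ x, w x = ∑ x, w₀ x ∧ (∀ u v, H.Adj u v → w u = 0 ∨ w v = 0) ∧
      blowUpEnergy H μ (fun x => w x) ≤ blowUpEnergy H μ fun x => w₀ x := by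
  induction hk : ∑ x, min (w₀ x) 1 using Nat.strong_induction_on generalizing w₀ with
  | _ k ih =>
    by_cases independent : ∀ u v, H.Adj u v → w₀ u = 0 ∨ w₀ v = 0
    · exact ⟨w₀, rfl, independent, le_rfl⟩
    · push Not at independent
      obtain ⟨u, v, huv, hu, hv⟩ := independent
      obtain ⟨w₁, sum_eq, support_lt, energy_le⟩ := exists_blowUpEnergy_le_of_adj μ w₀ huv hu hv
      obtain ⟨w, hsum, hw, hE⟩ := ih _ (support_lt.trans_eq hk) w₁ rfl
      exact ⟨w, hsum.trans sum_eq, hw, hE.trans energy_le⟩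

/-- The blow-up energy of a clique on `m` vertices. -/
noncomputable def cliqueEnergy (μ m : ℝ) : ℝ :=
  m ^ 3 / 2 - μ * m ^ 2

theorem blowUpEnergy_of_independent (μ : ℝ) {w : ι → ℝ}
    (hw : ∀ u v, H.Adj u v → w u = 0 ∨ w v = 0) :
    blowUpEnergy H μ w = ∑ x, cliqueEnergy μ (w x) := by
  classical
  have diagonal (x : ι) (f : ι → ℝ) :
      w x * ∑ y, w y * (closedAdj H x y * f y) = w x * (w x * f x) := by
    rcases eq_or_ne (w x) 0 with hx | hx
    · simp only [hx, zero_mul]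
    congr 1
    rw [Finset.sum_eq_single x, closedAdj_self, one_mul]
    · intro y _ hyx
      by_cases hxy : H.Adj x y
      · rw [(hw x y hxy).resolve_left hx, zero_mul]
      · simp [closedAdj, hxy, hyx.symm]
    · simp
  have cherries : tripleSum (closedCherry H) w w w = ∑ x, w x ^ 3 / 2 := by
    refine Finset.sum_congr rfl fun x _ => ?_
    have regroup (y : ι) : ∑ z, w z * closedCherry H x y z =
        closedAdj H x y * ∑ z, w z * (closedAdj H y z * (1 - closedAdj H x z / 2)) := by
      simp only [closedCherry, Finset.mul_sum, mul_left_comm]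
    simp only [regroup]
    rw [diagonal, diagonal, closedAdj_self]
    ring
  have edges : ∑ x, w x * ∑ y, w y * closedAdj H x y = ∑ x, w x ^ 2 := by
    refine Finset.sum_congr rfl fun x _ => ?_
    simpa [sq] using diagonal x fun _ => 1
  simp only [cliqueEnergy, Finset.sum_sub_distrib, ← Finset.mul_sum]
  rw [blowUpEnergy, cherries, edges]

end BlowUp

section CherryWeight

open Classical in
/-- The number of induced paths `x, y, z` in `H` plus half the number of its triangles, both counted
as ordered triples. -/
noncomputable def cherryWeight {ι : Type*} [Fintype ι] (H : SimpleGraph ι) : ℝ :=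
  ∑ x, ∑ y, ∑ z,
    if x ≠ z ∧ H.Adj x y ∧ H.Adj y z then if H.Adj x z then 1 / 2 else 1 else 0

open Classical in
/-- The number of ordered pairs of adjacent vertices of `H`, as a real number. -/
noncomputable def dartCount {ι : Type*} [Fintype ι] (H : SimpleGraph ι) : ℝ :=
  ∑ x, ∑ y, if H.Adj x y then 1 else 0

variable {ι : Type*} [Fintype ι] (H : SimpleGraph ι)

theorem sum_closedAdj :
    ∑ x, ∑ y, closedAdj H x y = dartCount H + Fintype.card ι := by
  classical
  have closedAdj_eq (x y : ι) :
      closedAdj H x y = (if H.Adj x y then 1 else 0) + if x = y then 1 else 0 := by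
    rcases eq_or_ne x y with rfl | hxy <;> simp [closedAdj, *]
  simp [closedAdj_eq, dartCount, Finset.sum_add_distrib]

theorem sum_closedCherry :
    ∑ x, ∑ y, ∑ z, closedCherry H x y z =
      cherryWeight H + 3 / 2 * dartCount H + Fintype.card ι / 2 := by
  classical
  have closedCherry_eq (x y z : ι) : closedCherry H x y z =
      (if x ≠ z ∧ H.Adj x y ∧ H.Adj y z then if H.Adj x z then 1 / 2 else 1 else 0) +
        (if x = y then (if H.Adj y z then 1 else 0) / 2 else 0) +
        (if y = z then (if H.Adj x y then 1 else 0) / 2 else 0) +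
        (if x = z then (if H.Adj x y then 1 else 0) / 2 else 0) +
        if x = y then if y = z then 1 / 2 else 0 else 0 := by
    rcases eq_or_ne x y with rfl | hxy
    · rcases eq_or_ne x z with rfl | hxz
      · norm_num [closedCherry, closedAdj]
      · by_cases h : H.Adj x z <;> norm_num [closedCherry, closedAdj, h, hxz]
    rcases eq_or_ne y z with rfl | hyz
    · by_cases h : H.Adj x y <;> norm_num [closedCherry, closedAdj, h, hxy]
    rcases eq_or_ne x z with rfl | hxz
    · by_cases h : H.Adj x y <;> norm_num [closedCherry, closedAdj, h, hxy, hyz, H.adj_comm y x]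
    by_cases h : H.Adj x z <;> by_cases h' : H.Adj x y <;> by_cases h'' : H.Adj y z <;>
      norm_num [closedCherry, closedAdj, h, h', h'', hxy, hyz, hxz]
  simp only [closedCherry_eq, Finset.sum_add_distrib]
  simp [cherryWeight, dartCount, ← Finset.sum_div]
  ring

theorem blowUpEnergy_one (μ : ℝ) :
    blowUpEnergy H μ (fun _ => 1) =
      cherryWeight H + (3 / 2 - μ) * dartCount H + (1 / 2 - μ) * Fintype.card ι := by
  simp only [blowUpEnergy, tripleSum, one_mul, sum_closedCherry, sum_closedAdj]
  ring

/-- Merging lowers the energy of two cliques exactly when `3 * (a + 1 + b) < 4 * μ`, and shifting a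
vertex to the smaller clique does not raise it otherwise. -/
theorem cliqueEnergy_merge_or_shift (μ : ℝ) (a b : ℕ) (hb : b ≠ 0) (hab : b < a) :
    cliqueEnergy μ (a + 1 + b : ℕ) < cliqueEnergy μ (a + 1 : ℕ) + cliqueEnergy μ b ∨
      cliqueEnergy μ a + cliqueEnergy μ (b + 1 : ℕ) ≤
        cliqueEnergy μ (a + 1 : ℕ) + cliqueEnergy μ b := by
  have b_pos : (0 : ℝ) < b := by exact_mod_cast Nat.pos_of_ne_zero hb
  have b_lt_a : (b : ℝ) < a := by exact_mod_cast hab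
  simp only [cliqueEnergy]
  push_cast
  rcases lt_or_ge (3 * (a + 1 + b : ℝ)) (4 * μ) with h | h
  · left
    nlinarith [mul_pos (mul_pos (by linarith : (0 : ℝ) < a + 1) b_pos) (sub_pos.mpr h)]
  · right
    nlinarith [mul_nonneg (sub_pos.mpr b_lt_a).le (sub_nonneg.mpr h)]

theorem four_mul_snd_sub_extremePoint {r l : ℕ} (hl : 1 ≤ l) (c : ℝ) :
    4 * (extremePoint r l).2 - 3 * c * (extremePoint r l).1 =
      ∑ i ∈ Finset.range l, cliqueEnergy ((3 + c) / 2) ((r + i) / l : ℕ) + (1 + c / 2) * r := by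
  have clique (m : ℕ) : ((m * (m - 1).choose 2 : ℕ) : ℝ) - c * (m.choose 2 : ℝ) =
      cliqueEnergy ((3 + c) / 2) m + (1 + c / 2) * m := by
    rw [cast_mul_choose_pred_two, Nat.cast_choose_two, cliqueEnergy]
    ring
  calc 4 * (extremePoint r l).2 - 3 * c * (extremePoint r l).1
      = ∑ i ∈ Finset.range l, ((((r + i) / l * ((r + i) / l - 1).choose 2 : ℕ) : ℝ) -
          c * (((r + i) / l).choose 2 : ℝ)) := by
        rw [Finset.sum_sub_distrib, ← Finset.mul_sum, extremePoint]
        ring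
    _ = _ := by
        simp only [clique, Finset.sum_add_distrib, ← Finset.mul_sum]
        rw [← Nat.cast_sum, sum_range_add_div hl]

theorem exists_mem_extremeSet_le_cherryWeight_sub (c : ℝ) :
    ∃ p ∈ extremeSet (Fintype.card ι),
      4 * p.2 - 3 * c * p.1 ≤ cherryWeight H - c / 2 * dartCount H := by
  rcases isEmpty_or_nonempty ι with hι | hι
  · exact ⟨_, Set.mem_insert _ _, by simp [cherryWeight, dartCount]⟩
  obtain ⟨w, sum_w, independent, energy_le⟩ :=
    exists_independent_blowUpEnergy_le H ((3 + c) / 2) fun _ => 1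
  replace sum_w : ∑ x, w x = Fintype.card ι := by simpa using sum_w
  obtain ⟨l, hl, hlr, balanced_le⟩ :=
    exists_balanced_sum_le (F := fun m => cliqueEnergy ((3 + c) / 2) m) (by simp [cliqueEnergy])
      (cliqueEnergy_merge_or_shift _) (sum_w.trans_gt Fintype.card_pos)
  rw [sum_w] at hlr balanced_le
  rw [blowUpEnergy_of_independent _ fun u v huv => by exact_mod_cast independent u v huv]
    at energy_le
  simp only [Nat.cast_one, blowUpEnergy_one] at energy_le
  refine ⟨_, Set.mem_insert_of_mem _ ⟨l, hl, hlr, rfl⟩, ?_⟩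
  rw [four_mul_snd_sub_extremePoint hl]
  linear_combination balanced_le.trans energy_le

end CherryWeight

section LinkAveraging

variable {V : Type*} (G : SimpleGraph V)

open Classical in
/-- The contribution of a rooted 4-cycle to the cherry weight of the link of its root. -/
noncomputable def chordWeight : V × V × V × V → ℝ
  | (w, x, y, z) => if G.Adj w y then if G.Adj x z then 1 / 2 else 1 else 0

theorem chordWeight_add_chordWeight_rotate_le (w x y z : V) :
    chordWeight G (w, x, y, z) + chordWeight G (x, y, z, w) ≤ 1 := by
  by_cases hwy : G.Adj w y <;> by_cases hxz : G.Adj x z <;>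
    norm_num [chordWeight, hwy, hxz, G.adj_comm y w]

variable [Fintype V]

theorem sum_neighborSet [DecidableRel G.Adj] {M : Type*} [AddCommMonoid M] (x : V) (f : V → M) :
    ∑ a : G.neighborSet x, f a = ∑ a, if G.Adj x a then f a else 0 := by
  rw [← Finset.sum_filter, Finset.sum_subtype (p := (· ∈ G.neighborSet x)) _ (by simp) f]

open Classical in
theorem sum_dartCount_link :
    ∑ x, dartCount (G.induce (G.neighborSet x)) = (triangleTuples G).card := by
  have card_eq : ((triangleTuples G).card : ℝ) =
      ∑ x, ∑ y, if G.Adj x y then ∑ z, if G.Adj x z then if G.Adj y z then 1 else 0 else 0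
        else 0 := by
    rw [Finset.card_eq_sum_ones, Nat.cast_sum, ← Fintype.sum_ite_mem]
    simp only [Fintype.sum_prod_type, Finset.ite_sum_zero, ← ite_and]
    refine Finset.sum_congr rfl fun x _ => Finset.sum_congr rfl fun y _ =>
      Finset.sum_congr rfl fun z _ => if_congr ?_ Nat.cast_one rfl
    rw [mem_triangleTuples, G.adj_comm z x, and_comm (a := G.Adj y z)]
  simp only [card_eq, ← sum_neighborSet]
  rfl

open Classical in
theorem sum_cherryWeight_link :
    ∑ x, cherryWeight (G.induce (G.neighborSet x)) = ∑ q ∈ fourCycleTuples G, chordWeight G q := by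
  have cycle_sum : ∑ q ∈ fourCycleTuples G, chordWeight G q =
      ∑ w, ∑ x, if G.Adj w x then ∑ y, if G.Adj w y then ∑ z, if G.Adj w z then
        if x ≠ z ∧ G.Adj x y ∧ G.Adj y z then if G.Adj x z then 1 / 2 else 1 else 0
        else 0 else 0 else 0 := by
    rw [← Fintype.sum_ite_mem]
    simp only [Fintype.sum_prod_type, Finset.ite_sum_zero, chordWeight]
    simp only [← ite_and]
    refine Finset.sum_congr rfl fun w _ => Finset.sum_congr rfl fun x _ =>
      Finset.sum_congr rfl fun y _ => Finset.sum_congr rfl fun z _ => if_congr ?_ rfl rfl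
    rw [mem_fourCycleTuples, G.adj_comm z w]
    constructor
    · rintro ⟨⟨hwx, hxy, hyz, hwz, -, hxz⟩, hwy⟩
      exact ⟨hwx, hwy, hwz, hxz, hxy, hyz⟩
    · rintro ⟨hwx, hwy, hwz, hxz, hxy, hyz⟩
      exact ⟨⟨hwx, hxy, hyz, hwz, hwy.ne, hxz⟩, hwy⟩
  simp only [cycle_sum, ← sum_neighborSet, cherryWeight, comap_adj,
    Function.Embedding.subtype_apply, Ne, Subtype.ext_iff]

theorem sum_chordWeight_rotate :
    ∑ q ∈ fourCycleTuples G, chordWeight G (q.2.1, q.2.2.1, q.2.2.2, q.1) =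
      ∑ q ∈ fourCycleTuples G, chordWeight G q := by
  refine Finset.sum_bij' (fun q _ => (q.2.1, q.2.2.1, q.2.2.2, q.1))
    (fun q _ => (q.2.2.2, q.1, q.2.1, q.2.2.1)) ?_ ?_ (fun _ _ => rfl) (fun _ _ => rfl)
    fun _ _ => rfl
  · rintro ⟨w, x, y, z⟩ h
    obtain ⟨hwx, hxy, hyz, hzw, hwy, hxz⟩ := mem_fourCycleTuples.mp h
    exact mem_fourCycleTuples.mpr ⟨hxy, hyz, hzw, hwx, hxz, hwy.symm⟩
  · rintro ⟨w, x, y, z⟩ h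
    obtain ⟨hwx, hxy, hyz, hzw, hwy, hxz⟩ := mem_fourCycleTuples.mp h
    exact mem_fourCycleTuples.mpr ⟨hzw, hwx, hxy, hyz, hxz.symm, hwy⟩

theorem sum_chordWeight_le :
    ∑ q ∈ fourCycleTuples G, chordWeight G q ≤ (fourCycleTuples G).card / 2 := by
  have pair_le : ∑ q ∈ fourCycleTuples G,
      (chordWeight G q + chordWeight G (q.2.1, q.2.2.1, q.2.2.2, q.1)) ≤
        ∑ _q ∈ fourCycleTuples G, 1 :=
    Finset.sum_le_sum fun q _ => chordWeight_add_chordWeight_rotate_le G q.1 q.2.1 q.2.2.1 q.2.2.2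
  rw [Finset.sum_add_distrib, sum_chordWeight_rotate, Finset.sum_const, nsmul_one] at pair_le
  linarith

open Classical in
theorem IsRegularGraph.exists_mem_extremeSet_link_le {r : ℕ} {G : SimpleGraph V}
    (hG : IsRegularGraph G r) (c : ℝ) (x : V) :
    ∃ p ∈ extremeSet r, 4 * p.2 - 3 * c * p.1 ≤ cherryWeight (G.induce (G.neighborSet x)) -
      c / 2 * dartCount (G.induce (G.neighborSet x)) := by
  rw [← hG x, Nat.card_eq_fintype_card]
  exact exists_mem_extremeSet_le_cherryWeight_sub _ c

open Classical in
theorem exists_link_cherryWeight_sub_le [Nonempty V] (c : ℝ) :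
    ∃ x, cherryWeight (G.induce (G.neighborSet x)) -
        c / 2 * dartCount (G.induce (G.neighborSet x)) ≤
      4 * cycleDensity G 4 - 3 * c * cycleDensity G 3 := by
  have fourCycle_card : ((fourCycleTuples G).card : ℝ) = 8 * Fintype.card V * cycleDensity G 4 := by
    rw [cycleDensity_four]
    field_simp
  have triangle_card : ((triangleTuples G).card : ℝ) = 6 * Fintype.card V * cycleDensity G 3 := by
    rw [cycleDensity_three]
    field_simp
  have total_le : ∑ x, (cherryWeight (G.induce (G.neighborSet x)) -
      c / 2 * dartCount (G.induce (G.neighborSet x))) ≤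
        ∑ _x : V, (4 * cycleDensity G 4 - 3 * c * cycleDensity G 3) := by
    have cherry_le := (sum_cherryWeight_link G).trans_le (sum_chordWeight_le G)
    rw [Finset.sum_sub_distrib, ← Finset.mul_sum, sum_dartCount_link, triangle_card,
      Finset.sum_const, Finset.card_univ, nsmul_eq_mul]
    rw [fourCycle_card] at cherry_le
    linear_combination cherry_le
  obtain ⟨x, -, hx⟩ := Finset.exists_le_of_sum_le Finset.univ_nonempty total_le
  exact ⟨x, hx⟩

end LinkAveraging

theorem IsRegularGraph.exists_mem_extremeSet_ge_of_neg {V : Type*} [Finite V] [Nonempty V]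
    {r : ℕ} {G : SimpleGraph V} (hG : IsRegularGraph G r) (a : ℝ) {b : ℝ} (hb : b < 0) :
    ∃ p ∈ extremeSet r, a * cycleDensity G 3 + b * cycleDensity G 4 ≤ a * p.1 + b * p.2 := by
  have := Fintype.ofFinite V
  set c : ℝ := -4 * a / (3 * b) with hc
  obtain ⟨x, hx⟩ := exists_link_cherryWeight_sub_le G c
  obtain ⟨p, hp, hpx⟩ := hG.exists_mem_extremeSet_link_le c x
  refine ⟨p, hp, ?_⟩
  have a_eq : a = -(3 * b * c) / 4 := by
    rw [hc, mul_div_cancel₀ _ (by linarith : 3 * b ≠ 0)]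
    ring
  have scaled := mul_le_mul_of_nonneg_left (hpx.trans hx) (by linarith : 0 ≤ -b / 4)
  rw [a_eq]
  linear_combination scaled

theorem density_pair_mem_convexHull_general {V : Type*} [Finite V] [Nonempty V] (r : ℕ)
    (G : SimpleGraph V) (hG : IsRegularGraph G r) :
    (cycleDensity G 3, cycleDensity G 4) ∈ convexHull ℝ (extremeSet r) := by
  refine mem_convexHull_prod_of_forall_exists_le (finite_extremeSet r) fun a b => ?_
  rcases le_or_gt 0 b with hb | hb
  · exact hG.exists_mem_extremeSet_ge_of_nonneg a hb
  · exact hG.exists_mem_extremeSet_ge_of_neg a hb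

/-- For every nonempty finite simple `r`-regular graph `G` (with `r ≥ 3`), the point
`(d₃(G), d₄(G))` lies in the convex polygon `Q^r`. -/
theorem density_pair_mem_convexHull {V : Type*} [Finite V] [Nonempty V]
    (r : ℕ) (hr : 3 ≤ r) (G : SimpleGraph V) (hG : IsRegularGraph G r) :
    (cycleDensity G 3, cycleDensity G 4) ∈ convexHull ℝ (extremeSet r) :=
  density_pair_mem_convexHull_general r G hG
end

section
/- Let r ≥ 3 be an integer, let G₁ and G₂ be nonempty finite simple r-regular graphs, and let q be a rational number with 0 < q < 1. Then there exists a nonempty finite simple r-regular graph G such that (d₃(G), d₄(G)) = q·(d₃(G₁), d₄(G₁)) + (1−q)·(d₃(G₂), d₄(G₂)). -/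
open SimpleGraph

/-! Take `a * |V₂|` disjoint copies of `G₁` and `b * |V₁|` disjoint copies of `G₂`, where
`q = a / (a + b)`: the order and the numbers of cycles are additive under disjoint union, and the
two parts hold a proportion `q` and `1 - q` of the vertices.

Additivity of the numbers of cycles has to survive the natural-number division in `cycleCount`.
Rooted cycles of length `k ≥ 3` are the copies of the cycle graph. Its automorphism group acts
freely on these and contains the dihedral group, so their number is divisible by `2 * k`. Since the
cycle graph is connected, each copy in a disjoint union lies in one of the two parts. -/

section Copies

variable {U V W X : Type*} {C : SimpleGraph U} {G : SimpleGraph V} {H : SimpleGraph W}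
  {K : SimpleGraph X}

/-- The automorphisms of `C` act on the copies of `C` in `G`. An automorphism acts by
precomposition with its inverse, which makes this a left action. -/
instance copyMulAction : MulAction (C ≃g C) (C.Copy G) where
  smul g f := f.comp g⁻¹.toCopy
  one_smul _ := rfl
  mul_smul _ _ _ := rfl

theorem stabilizer_copy_eq_bot (f : C.Copy G) : MulAction.stabilizer (C ≃g C) f = ⊥ := by
  refine (Subgroup.eq_bot_iff_forall _).mpr fun g hg => inv_eq_one.mp ?_
  ext u
  exact f.injective (DFunLike.congr_fun (MulAction.mem_stabilizer_iff.mp hg) u)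

variable (C G) in
theorem card_aut_dvd_card_copy : Nat.card (C ≃g C) ∣ Nat.card (C.Copy G) := by
  rw [Nat.card_congr (MulAction.selfEquivOrbitsQuotientProd stabilizer_copy_eq_bot), Nat.card_prod]
  exact dvd_mul_left _ _

theorem card_copy_congr (e : G ≃g H) : Nat.card (C.Copy G) = Nat.card (C.Copy H) :=
  Nat.card_congr
    { toFun := e.toCopy.comp
      invFun := e.symm.toCopy.comp
      left_inv f := by ext u; simp
      right_inv f := by ext u; simp }

theorem exists_comp_eq_of_range_subset (e : G ↪g K) (f : C.Copy K)
    (hf : Set.range f ⊆ Set.range e) : ∃ g : C.Copy G, e.toCopy.comp g = f := by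
  choose g hg using fun u => hf ⟨u, rfl⟩
  refine ⟨⟨⟨g, fun {u v} huv => ?_⟩, fun u v huv => f.injective ?_⟩, Copy.ext hg⟩
  · rw [← e.map_adj_iff, hg, hg]
    exact f.toHom.map_adj huv
  · rw [Copy.toHom_apply, Copy.toHom_apply, ← hg u, ← hg v]
    exact congrArg e huv

theorem range_subset_inl_or_inr (hC : C.Preconnected) (f : C →g G ⊕g H) :
    Set.range f ⊆ Set.range Sum.inl ∨ Set.range f ⊆ Set.range Sum.inr := by
  by_contra! h
  obtain ⟨⟨_, ⟨u, rfl⟩, hu⟩, ⟨_, ⟨v, rfl⟩, hv⟩⟩ :=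
    And.imp Set.not_subset.mp Set.not_subset.mp h
  obtain ⟨w, hw⟩ : f u ∈ Set.range Sum.inr := Set.compl_range_inl ▸ hu
  obtain ⟨x, hx⟩ : f v ∈ Set.range Sum.inl := Set.compl_range_inr ▸ hv
  apply not_reachable_sum_inl_inr (G := G) (H := H) x w
  rw [hx, hw]
  exact (hC v u).map f

theorem card_copy_sum [Finite U] [Finite V] [Finite W] (hC : C.Connected) :
    Nat.card (C.Copy (G ⊕g H)) = Nat.card (C.Copy G) + Nat.card (C.Copy H) := by
  have := DFunLike.finite (C.Copy G)
  have := DFunLike.finite (C.Copy H)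
  obtain ⟨u⟩ := hC.nonempty
  let inl : G ↪g G ⊕g H := Embedding.sumInl
  let inr : H ↪g G ⊕g H := Embedding.sumInr
  rw [← Nat.card_sum]
  symm
  refine Nat.card_eq_of_bijective (Sum.elim inl.toCopy.comp inr.toCopy.comp) ⟨?_, fun f => ?_⟩
  · refine Function.Injective.sumElim (fun f g hfg => ?_) (fun f g hfg => ?_) fun f g hfg => ?_
    · exact Copy.ext fun v => inl.injective (DFunLike.congr_fun hfg v)
    · exact Copy.ext fun v => inr.injective (DFunLike.congr_fun hfg v)
    · exact Sum.inl_ne_inr (DFunLike.congr_fun hfg u)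
  · rcases range_subset_inl_or_inr hC.preconnected f.toHom with hf | hf
    · obtain ⟨g, hg⟩ := exists_comp_eq_of_range_subset inl f hf
      exact ⟨Sum.inl g, hg⟩
    · obtain ⟨g, hg⟩ := exists_comp_eq_of_range_subset inr f hf
      exact ⟨Sum.inr g, hg⟩

end Copies

section CycleGraph

variable {n : ℕ}

/-- The rotation of the cycle graph by `-i`. -/
def cycleGraphSubRight (i : Fin (n + 2)) : cycleGraph (n + 2) ≃g cycleGraph (n + 2) where
  toEquiv := Equiv.subRight i
  map_rel_iff' {x y} := by
    simp only [cycleGraph_adj, Equiv.subRight_apply, sub_sub_sub_cancel_right]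

/-- The reflection of the cycle graph that exchanges `0` and `i`. -/
def cycleGraphSubLeft (i : Fin (n + 2)) : cycleGraph (n + 2) ≃g cycleGraph (n + 2) where
  toEquiv := Equiv.subLeft i
  map_rel_iff' {x y} := by
    simp only [cycleGraph_adj, Equiv.subLeft_apply, sub_sub_sub_cancel_left, or_comm]

variable (n) in
/-- The action of the dihedral group on the cycle graph, where the vertex type `Fin (n + 2)` is
definitionally `ZMod (n + 2)`. Rotating by `-i` rather than `i` matches the multiplication rule
`r i * sr j = sr (j - i)` of `DihedralGroup`. -/
def dihedralToAut :
    DihedralGroup (n + 2) →* (cycleGraph (n + 2) ≃g cycleGraph (n + 2)) where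
  toFun
    | .r i => cycleGraphSubRight i
    | .sr i => cycleGraphSubLeft i
  map_one' := RelIso.ext fun x : ZMod (n + 2) => sub_zero x
  map_mul' := by
    rintro (i | i) (j | j) <;> refine RelIso.ext fun x : ZMod (n + 2) => ?_
    · exact (by abel : x - (i + j) = x - j - i)
    · exact (by abel : j - i - x = j - x - i)
    · exact (by abel : i + j - x = i - (x - j))
    · exact (by abel : x - (j - i) = i - (j - x))

theorem dihedralToAut_injective : Function.Injective (dihedralToAut (n + 1)) := by
  refine (injective_iff_map_eq_one _).mpr ?_
  rintro (i | i) h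
  · have h0 : (0 : ZMod (n + 3)) - i = 0 := DFunLike.congr_fun h (0 : Fin (n + 3))
    rw [← sub_eq_zero.mp h0]
    rfl
  · have h0 : i - 0 = (0 : ZMod (n + 3)) := DFunLike.congr_fun h (0 : Fin (n + 3))
    have h1 : i - 1 = (1 : ZMod (n + 3)) := DFunLike.congr_fun h (1 : Fin (n + 3))
    have : Fact (2 < n + 3) := ⟨by lia⟩
    rw [sub_zero] at h0
    rw [h0, zero_sub] at h1
    exact absurd h1 ZMod.neg_one_ne_one

theorem two_mul_dvd_card_aut_cycleGraph {k : ℕ} (hk : 3 ≤ k) :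
    2 * k ∣ Nat.card (cycleGraph k ≃g cycleGraph k) := by
  obtain ⟨n, rfl⟩ := Nat.exists_eq_add_of_le' hk
  rw [← DihedralGroup.nat_card]
  exact Subgroup.card_dvd_of_injective _ dihedralToAut_injective

end CycleGraph

section RootedCycles

variable {V W : Type*} {G : SimpleGraph V} {H : SimpleGraph W} {k n : ℕ}

/-- The cycles of length `k` in `G` with a base point and an orientation, encoded as closed walks.
These are the objects that `cycleCount` counts before dividing by `2 * k`. -/
abbrev RootedCycle (G : SimpleGraph V) (k : ℕ) : Type _ :=
  (x : V) × {p : G.Walk x x // p.IsCycle ∧ p.length = k}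

theorem RootedCycle.ext_getVert {p q : RootedCycle G k}
    (h : ∀ i ≤ k, p.2.1.getVert i = q.2.1.getVert i) : p = q := by
  obtain ⟨x, p, hp, hpk⟩ := p
  obtain ⟨y, q, hq, hqk⟩ := q
  obtain rfl : x = y := by simpa using h 0 (Nat.zero_le k)
  obtain rfl : p = q := Walk.ext_getVert_le_length (hpk.trans hqk.symm) fun i hi => h i (hpk ▸ hi)
  rfl

theorem getVert_mod_of_length_eq {x : V} {p : G.Walk x x} (hp : p.length = k) {i : ℕ} (hi : i ≤ k) :
    p.getVert (i % k) = p.getVert i := by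
  subst hp
  rcases hi.eq_or_lt with rfl | hi
  · simp
  · rw [Nat.mod_eq_of_lt hi]

theorem adj_getVert_fin_add_one {x : V} {p : G.Walk x x} (hp : p.length = n + 2)
    (i : Fin (n + 2)) : G.Adj (p.getVert i) (p.getVert (i + 1 : Fin (n + 2))) := by
  rw [Fin.val_add, Fin.val_one, getVert_mod_of_length_eq hp (by lia)]
  exact p.adj_getVert_succ (by lia)

theorem getVert_reverse_cycle {i : ℕ} (hi : i ≤ n + 3) :
    (cycleGraph.cycle n).reverse.getVert i = Fin.ofNat (n + 3) i := by
  rw [Walk.getVert_reverse, cycleGraph.length_cycle, cycleGraph.getVert_cycle (Nat.sub_le _ _)]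
  ext
  simp [Nat.sub_sub_self hi]

/-- The copy of the cycle graph traced out by a rooted cycle, starting at the base point. -/
def RootedCycle.toCopy (c : RootedCycle G (n + 3)) : (cycleGraph (n + 3)).Copy G where
  toHom :=
    { toFun i := c.2.1.getVert i
      map_rel' {i j} hij := by
        rcases cycleGraph_adj.mp hij with h | h
        · obtain rfl := sub_eq_iff_eq_add'.mp h
          exact (adj_getVert_fin_add_one c.2.2.2 j).symm
        · obtain rfl := sub_eq_iff_eq_add'.mp h
          exact adj_getVert_fin_add_one c.2.2.2 i }
  injective' i j hij := by
    obtain ⟨x, p, hp, hpk⟩ := c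
    exact Fin.ext (hp.getVert_injOn' (by grind) (by grind) hij)

theorem card_rootedCycle_add_three (G : SimpleGraph V) (n : ℕ) :
    Nat.card (RootedCycle G (n + 3)) = Nat.card ((cycleGraph (n + 3)).Copy G) := by
  symm
  let root (f : (cycleGraph (n + 3)).Copy G) : RootedCycle G (n + 3) :=
    ⟨_, (cycleGraph.cycle n).reverse.map f.toHom,
      (Walk.isCycle_map_iff_of_injective f.injective).mpr cycleGraph.isCycle_cycle.reverse, by simp⟩
  have getVert_root (f) {i : ℕ} (hi : i ≤ n + 3) :
      (root f).2.1.getVert i = f (Fin.ofNat (n + 3) i) := by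
    simp only [root, Walk.getVert_map, getVert_reverse_cycle hi, Copy.toHom_apply]
  refine Nat.card_eq_of_bijective root ⟨fun f g hfg => ?_, fun c => ⟨c.toCopy, ?_⟩⟩
  · ext i
    have := congrArg (fun c : RootedCycle G (n + 3) => c.2.1.getVert i) hfg
    simpa only [getVert_root _ i.2.le, Fin.ofNat_val_eq_self] using this
  · refine RootedCycle.ext_getVert fun i hi => ?_
    rw [getVert_root _ hi]
    exact getVert_mod_of_length_eq c.2.2.2 hi

theorem card_rootedCycle (G : SimpleGraph V) (k : ℕ) :
    Nat.card (RootedCycle G k) = if 3 ≤ k then Nat.card ((cycleGraph k).Copy G) else 0 := by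
  split_ifs with hk
  · obtain ⟨n, rfl⟩ := Nat.exists_eq_add_of_le' hk
    exact card_rootedCycle_add_three G n
  · have : IsEmpty (RootedCycle G k) := ⟨fun c => hk (c.2.2.2 ▸ c.2.2.1.three_le_length)⟩
    exact Nat.card_of_isEmpty

variable (G k) in
theorem two_mul_dvd_card_rootedCycle : 2 * k ∣ Nat.card (RootedCycle G k) := by
  rw [card_rootedCycle]
  split_ifs with hk
  · exact (two_mul_dvd_card_aut_cycleGraph hk).trans (card_aut_dvd_card_copy _ _)
  · exact dvd_zero _

theorem card_rootedCycle_sum [Finite V] [Finite W] :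
    Nat.card (RootedCycle (G ⊕g H) k) =
      Nat.card (RootedCycle G k) + Nat.card (RootedCycle H k) := by
  simp only [card_rootedCycle]
  split_ifs with hk
  · have : NeZero k := ⟨by lia⟩
    exact card_copy_sum ⟨cycleGraph_preconnected⟩
  · rfl

theorem cycleCount_sum [Finite V] [Finite W] :
    cycleCount (G ⊕g H) k = cycleCount G k + cycleCount H k := by
  simp only [cycleCount]
  rw [card_rootedCycle_sum, Nat.add_div_of_dvd_right (two_mul_dvd_card_rootedCycle G k)]

theorem cycleCount_congr (e : G ≃g H) : cycleCount G k = cycleCount H k := by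
  simp only [cycleCount, card_rootedCycle, card_copy_congr e]

theorem cycleCount_of_isEmpty [IsEmpty V] : cycleCount G k = 0 := by
  simp [cycleCount]

end RootedCycles

namespace IsRegularGraph

variable {V W : Type*} {G : SimpleGraph V} {H : SimpleGraph W} {r : ℕ}

theorem sum (hG : IsRegularGraph G r) (hH : IsRegularGraph H r) : IsRegularGraph (G ⊕g H) r := by
  rintro (v | w)
  · rw [neighborSet_sum_inl, Nat.card_image_of_injective Sum.inl_injective, hG v]
  · rw [neighborSet_sum_inr, Nat.card_image_of_injective Sum.inr_injective, hH w]

theorem congr (e : G ≃g H) (hG : IsRegularGraph G r) : IsRegularGraph H r := fun w =>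
  (Nat.card_congr (e.symm.mapNeighborSet w)).trans (hG (e.symm w))

end IsRegularGraph

/-- The pairs consisting of the order and the sequence of cycle counts of a finite `r`-regular
graph. They form a monoid because both entries are additive under disjoint union. -/
def regularCycleProfiles (r : ℕ) : AddSubmonoid (ℕ × (ℕ → ℕ)) where
  carrier := {p | ∃ (V : Type) (G : SimpleGraph V), Finite V ∧ IsRegularGraph G r ∧
    (Nat.card V, cycleCount G) = p}
  zero_mem' := ⟨Empty, ⊥, inferInstance, nofun,
    Prod.ext Nat.card_of_isEmpty (funext fun _ => cycleCount_of_isEmpty)⟩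
  add_mem' := by
    rintro _ _ ⟨V, G, _, hG, rfl⟩ ⟨W, H, _, hH, rfl⟩
    exact ⟨V ⊕ W, G ⊕g H, inferInstance, hG.sum hH,
      Prod.ext Nat.card_sum (funext fun _ => cycleCount_sum)⟩

theorem IsRegularGraph.mem_regularCycleProfiles {V : Type*} [Finite V] {G : SimpleGraph V} {r : ℕ}
    (hG : IsRegularGraph G r) : (Nat.card V, cycleCount G) ∈ regularCycleProfiles r := by
  have e := Iso.map (Finite.equivFin V) G
  exact ⟨Fin (Nat.card V), _, inferInstance, hG.congr e,
    Prod.ext (Nat.card_fin _) (funext fun _ => (cycleCount_congr e).symm)⟩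

theorem exists_nat_eq_div_add {q : ℚ} (hq0 : 0 ≤ q) (hq1 : q ≤ 1) :
    ∃ a b : ℕ, a + b ≠ 0 ∧ q = a / (a + b) := by
  lift q to ℚ≥0 using hq0
  have hle : q.num ≤ q.den := by
    simpa [NNRat.le_def] using (show q ≤ 1 from mod_cast hq1)
  obtain ⟨b, hb⟩ := Nat.exists_eq_add_of_le hle
  refine ⟨q.num, b, hb ▸ q.den_ne_zero, ?_⟩
  rw [← Nat.cast_add, ← hb]
  exact q.cast_def

theorem exists_regular_graph_convex_combination_general {V₁ V₂ : Type*}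
    [Finite V₁] [Nonempty V₁] [Finite V₂] [Nonempty V₂] {r : ℕ}
    (G₁ : SimpleGraph V₁) (G₂ : SimpleGraph V₂)
    (h₁ : IsRegularGraph G₁ r) (h₂ : IsRegularGraph G₂ r)
    {q : ℚ} (hq0 : 0 ≤ q) (hq1 : q ≤ 1) :
    ∃ (V : Type) (G : SimpleGraph V), Finite V ∧ Nonempty V ∧ IsRegularGraph G r ∧
      ∀ k, cycleDensity G k = (q : ℝ) * cycleDensity G₁ k + (1 - (q : ℝ)) * cycleDensity G₂ k := by
  obtain ⟨a, b, hab, rfl⟩ := exists_nat_eq_div_add hq0 hq1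
  obtain ⟨V, G, hV, hG, hprofile⟩ := add_mem
    (nsmul_mem h₁.mem_regularCycleProfiles (a * Nat.card V₂))
    (nsmul_mem h₂.mem_regularCycleProfiles (b * Nat.card V₁))
  have hcard₁ : Nat.card V₁ ≠ 0 := Nat.card_pos.ne'
  have hcard₂ : Nat.card V₂ ≠ 0 := Nat.card_pos.ne'
  have hcard : Nat.card V = (a + b) * Nat.card V₁ * Nat.card V₂ := by
    refine (congrArg Prod.fst hprofile).trans ?_
    simp only [Prod.fst_add, Prod.smul_fst, smul_eq_mul]
    ring
  have hcount (k : ℕ) : cycleCount G k =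
      a * Nat.card V₂ * cycleCount G₁ k + b * Nat.card V₁ * cycleCount G₂ k :=
    congrFun (congrArg Prod.snd hprofile) k
  have hV' : Nonempty V := (Nat.card_ne_zero.mp (by rw [hcard]; positivity)).1
  refine ⟨V, G, hV, hV', hG, fun k => ?_⟩
  have hab' : (a + b : ℝ) ≠ 0 := mod_cast hab
  simp only [cycleDensity, hcard, hcount]
  push_cast
  field_simp
  ring

/-- Rational convex combinations of points `(d₃, d₄)` realized by nonempty finite simple
`r`-regular graphs are again realized by such a graph. -/
theorem exists_regular_graph_convex_combination {V₁ V₂ : Type*}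
    [Finite V₁] [Nonempty V₁] [Finite V₂] [Nonempty V₂]
    (r : ℕ) (hr : 3 ≤ r) (G₁ : SimpleGraph V₁) (G₂ : SimpleGraph V₂)
    (h₁ : IsRegularGraph G₁ r) (h₂ : IsRegularGraph G₂ r)
    (q : ℚ) (hq0 : 0 < q) (hq1 : q < 1) :
    ∃ (V : Type) (G : SimpleGraph V), Finite V ∧ Nonempty V ∧ IsRegularGraph G r ∧
      cycleDensity G 3 = (q : ℝ) * cycleDensity G₁ 3 + (1 - (q : ℝ)) * cycleDensity G₂ 3 ∧
      cycleDensity G 4 = (q : ℝ) * cycleDensity G₁ 4 + (1 - (q : ℝ)) * cycleDensity G₂ 4 := by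
  obtain ⟨V, G, hV, hV', hG, hdensity⟩ :=
    exists_regular_graph_convex_combination_general G₁ G₂ h₁ h₂ hq0.le hq1.le
  exact ⟨V, G, hV, hV', hG, hdensity 3, hdensity 4⟩
end
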